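/- There exists a constant C > 1 such that for every integer x ≥ 2 and every element W of N(∞) with |W| ≤ x, there is an expression W = ∏_{j=1}^{L} X_j R_j^{ε_j} X_j^{-1} in F with X_j ∈ F, R_j ∈ R*(∞), ε_j = ±1, such that: the number of indices j with h(R_j) = 0 is at most C·x²; for every i with 1 ≤ i ≤ log₂(x), the number of indices j with h(R_j) = i is at most C·x²/2^{i−1}; and there is no index j with h(R_j) > log₂(x). -/

import Mathlib

/-- The four-letter alphabet `{a, b, c, d}`. -/
inductive L4 : Type
  | a | b | c | d
  deriving DecidableEq

/-- The free group `F = F(a, b, c, d)`. -/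
abbrev F4 : Type := FreeGroup L4

def ga : F4 := FreeGroup.of L4.a
def gb : F4 := FreeGroup.of L4.b
def gc : F4 := FreeGroup.of L4.c
def gd : F4 := FreeGroup.of L4.d

/-- The endomorphism `σ` of `F(a,b,c,d)`:
`σ(a) = aca`, `σ(b) = d`, `σ(c) = b`, `σ(d) = c`. -/
def sigma : F4 →* F4 :=
  FreeGroup.lift fun x => match x with
    | L4.a => ga * gc * ga
    | L4.b => gd
    | L4.c => gb
    | L4.d => gc

/-- The Lysenok relator set
`R(∞) = {a², b², c², d², bcd} ∪ {σⁱ((ad)⁴) : i ≥ 0} ∪ {σⁱ((adacac)⁴) : i ≥ 0}`. -/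
def Rinf : Set F4 :=
  {ga ^ 2, gb ^ 2, gc ^ 2, gd ^ 2, gb * gc * gd}
    ∪ {w | ∃ i : ℕ, w = (⇑sigma)^[i] ((ga * gd) ^ 4)}
    ∪ {w | ∃ i : ℕ, w = (⇑sigma)^[i] ((ga * gd * ga * gc * ga * gc) ^ 4)}

/-- `W` is a product of `L` conjugates of elements of `R ∪ R⁻¹`. -/
def IsProdConjPM {G : Type*} [Group G] (R : Set G) (L : ℕ) (W : G) : Prop :=
  ∃ f : Fin L → G,
    (∀ j, ∃ x r, r ∈ R ∧ (f j = x * r * x⁻¹ ∨ f j = x * r⁻¹ * x⁻¹)) ∧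
    W = (List.ofFn f).prod

/-- The extended relator set `R*(∞) = R(∞) ∪ {σⁱ(a²) : i ≥ 1}`. -/
def RinfStar : Set F4 :=
  Rinf ∪ {w | ∃ i : ℕ, 1 ≤ i ∧ w = (⇑sigma)^[i] (ga ^ 2)}

/-- The partition `R*(∞) = ⋃ᵢ S*(i)` by height: `S*(0)` consists of the seven
relators `a², b², c², d², bcd, (ad)⁴, (adacac)⁴`, and for `i ≥ 1`,
`S*(i) = {σⁱ((ad)⁴), σⁱ((adacac)⁴), σⁱ(a²)}`. -/
def ShStar : ℕ → Set F4
  | 0 => {ga ^ 2, gb ^ 2, gc ^ 2, gd ^ 2, gb * gc * gd,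
          (ga * gd) ^ 4, (ga * gd * ga * gc * ga * gc) ^ 4}
  | (i + 1) => {(⇑sigma)^[i + 1] ((ga * gd) ^ 4),
                (⇑sigma)^[i + 1] ((ga * gd * ga * gc * ga * gc) ^ 4),
                (⇑sigma)^[i + 1] (ga ^ 2)}

/-!
Let `ψ` be the wreath recursion of the Grigorchuk group, which sends a word of `N(∞)` to a pair of
words `(U, V)` in `N(∞)`. The endomorphism `σ` satisfies `ψ(σ(w)) = (φ(w), w)`, where `φ` takes
values in `⟨a, d⟩`, a dihedral group of order 8 modulo the relators. Modulo relators of height at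
most 1, the element `σ(φ(w))⁻¹ · aσ(w)a⁻¹` commutes with `d`; since the values of `φ` form a finite
group, this costs only linearly many relators. Reading `W` letter by letter therefore turns it into
`σ(V) · aσ(U)a⁻¹` using quadratically many relators of height at most 1.

After `W` is conjugated and adjacent letters other than `a` are merged, both sections have at most
half the length of `W`, so the construction recurses. Since `σ` raises heights by one, relators of
height `i` appear only after about `i` halvings; by then the squared length has dropped by `4 ^ i`
and the number of words has grown by `2 ^ i`, which leaves a factor `2 ^ (-i)`.
-/

section ConjProd

variable {G H ι κ : Type*} [Group G] [Group H]

/-- `IsConjProd S n g`: the element `g` is a product of conjugates of powers `±1` of relators, where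
the relator in each factor is charged to some `i` with the relator in `S i`, and `n` is an upper
bound for the multiset of these labels. -/
inductive IsConjProd (S : ι → Set G) : Multiset ι → G → Prop
  | one (n : Multiset ι) : IsConjProd S n 1
  | cons {n : Multiset ι} {g r : G} {i : ι} (x : G) (ε : ℤˣ) (hr : r ∈ S i)
      (hg : IsConjProd S n g) : IsConjProd S (i ::ₘ n) (x * r ^ (ε : ℤ) * x⁻¹ * g)

namespace IsConjProd

variable {S : ι → Set G} {n m : Multiset ι} {g h r : G} {i : ι}

theorem of_mem (hr : r ∈ S i) : IsConjProd S {i} r := by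
  simpa using cons 1 1 hr (one 0)

theorem mono (hg : IsConjProd S n g) (hnm : n ≤ m) : IsConjProd S m g := by
  induction hg generalizing m with
  | one => exact one m
  | @cons n g r i x ε hr _ ih =>
    obtain ⟨m, rfl⟩ := Multiset.exists_cons_of_mem (Multiset.mem_of_le hnm (n.mem_cons_self i))
    exact cons x ε hr (ih ((Multiset.cons_le_cons_iff i).1 hnm))

theorem mul (hg : IsConjProd S n g) (hh : IsConjProd S m h) : IsConjProd S (n + m) (g * h) := by
  induction hg with
  | one => simpa using hh.mono (Multiset.le_add_left m _)
  | cons x ε hr _ ih => simpa [mul_assoc] using cons x ε hr ih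

theorem conj (x : G) (hg : IsConjProd S n g) : IsConjProd S n (x * g * x⁻¹) := by
  induction hg with
  | one n => simpa using one n
  | cons y ε hr _ ih => simpa [mul_assoc] using cons (x * y) ε hr ih

theorem inv (hg : IsConjProd S n g) : IsConjProd S n g⁻¹ := by
  induction hg with
  | one n => simpa using one n
  | @cons n g r i x ε hr _ ih =>
    have hfactor := cons x (-ε) hr (one 0)
    simpa [mul_assoc, add_comm n] using ih.mul hfactor

theorem zpow_unit (ε : ℤˣ) (hg : IsConjProd S n g) : IsConjProd S n (g ^ (ε : ℤ)) := by
  rcases Int.units_eq_one_or ε with rfl | rfl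
  · simpa using hg
  · simpa using hg.inv

theorem map (f : G →* H) {S' : κ → Set H} (c : ι → Multiset κ)
    (hc : ∀ i, ∀ r ∈ S i, IsConjProd S' (c i) (f r)) (hg : IsConjProd S n g) :
    IsConjProd S' (n.bind c) (f g) := by
  induction hg with
  | one => simpa using one _
  | cons x ε hr _ ih =>
    simpa using (((hc _ _ hr).zpow_unit ε).conj (f x)).mul ih

theorem mem_of_subset {N : Subgroup G} [N.Normal] (hS : ∀ i, S i ⊆ N) (hg : IsConjProd S n g) :
    g ∈ N := by
  induction hg with
  | one => exact N.one_mem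
  | cons x ε hr _ ih =>
    exact N.mul_mem (Subgroup.Normal.conj_mem ‹_› _ (N.zpow_mem (hS _ hr) _) x) ih

theorem exists_ofFn (hg : IsConjProd S n g) :
    ∃ (L : ℕ) (X R : Fin L → G) (ε : Fin L → ℤˣ) (label : Fin L → ι),
      (∀ j, R j ∈ S (label j)) ∧
      g = (List.ofFn fun j => X j * R j ^ (ε j : ℤ) * (X j)⁻¹).prod ∧
      Finset.univ.val.map label ≤ n := by
  induction hg with
  | one n => exact ⟨0, ![], ![], ![], ![], by simp, by simp, by simp⟩
  | @cons n g r i x ε hr _ ih =>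
    obtain ⟨L, X, R, δ, label, hR, rfl, hlabel⟩ := ih
    refine ⟨L + 1, Fin.cons x X, Fin.cons r R, Fin.cons ε δ, Fin.cons i label, ?_, ?_, ?_⟩
    · exact Fin.cons hr hR
    · simp [List.ofFn_succ]
    · rw [Fin.univ_val_map] at hlabel ⊢
      simpa [List.ofFn_succ, ← Multiset.cons_coe] using hlabel

theorem exists_ofFn_card_le [DecidableEq ι] (hS : Pairwise (Function.onFun Disjoint S))
    (hg : IsConjProd S n g) :
    ∃ (L : ℕ) (X R : Fin L → G) (ε : Fin L → ℤˣ),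
      (∀ j, ∃ i, R j ∈ S i) ∧
      g = (List.ofFn fun j => X j * R j ^ (ε j : ℤ) * (X j)⁻¹).prod ∧
      ∀ i, Nat.card {j // R j ∈ S i} ≤ n.count i := by
  obtain ⟨L, X, R, ε, label, hR, hprod, hlabel⟩ := hg.exists_ofFn
  refine ⟨L, X, R, ε, fun j => ⟨_, hR j⟩, hprod, fun i => ?_⟩
  have hmem : ∀ j, R j ∈ S i ↔ i = label j := fun j =>
    ⟨fun hj => by_contra fun hne => Set.disjoint_left.1 (hS hne) hj (hR j), fun h => h ▸ hR j⟩
  calc Nat.card {j // R j ∈ S i}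
      = Nat.card {j // i = label j} := Nat.card_congr (Equiv.subtypeEquivRight hmem)
    _ = (Finset.univ.val.map label).count i := by
      rw [Nat.card_eq_fintype_card, Fintype.card_subtype, Multiset.count_map]; rfl
    _ ≤ n.count i := Multiset.count_le_of_le i hlabel

end IsConjProd

end ConjProd

section NearMod

variable {G : Type*} [Group G] {T : Set G} {K K' : ℕ} {u v w u' v' : G}

/-- `u * v⁻¹` is a product of at most `K` conjugates of elements of `T ∪ T⁻¹`: the words `u` and `v`
are `K` relator applications apart in the presentation with relators `T`. -/
def NearMod (T : Set G) (K : ℕ) (u v : G) : Prop :=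
  IsConjProd (fun _ : Unit => T) (Multiset.replicate K ()) (u * v⁻¹)

namespace NearMod

theorem refl (T : Set G) (K : ℕ) (u : G) : NearMod T K u u := by
  simpa [NearMod] using IsConjProd.one _

theorem of_mem (hu : u ∈ T) : NearMod T 1 u 1 := by
  simpa [NearMod] using IsConjProd.of_mem (S := fun _ : Unit => T) (i := ()) hu

theorem mono (h : NearMod T K u v) (hK : K ≤ K') : NearMod T K' u v :=
  IsConjProd.mono h ((Multiset.replicate_le_replicate ()).2 hK)

theorem symm (h : NearMod T K u v) : NearMod T K v u := by
  simpa [NearMod] using IsConjProd.inv h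

theorem trans (h : NearMod T K u v) (h' : NearMod T K' v w) : NearMod T (K + K') u w := by
  simpa [NearMod, Multiset.replicate_add] using IsConjProd.mul h h'

theorem mul_right (h : NearMod T K u v) (g : G) : NearMod T K (u * g) (v * g) := by
  simpa [NearMod, mul_assoc] using h

theorem mul_left (h : NearMod T K u v) (g : G) : NearMod T K (g * u) (g * v) := by
  simpa [NearMod, mul_assoc] using IsConjProd.conj g h

theorem mul (h : NearMod T K u v) (h' : NearMod T K' u' v') :
    NearMod T (K + K') (u * u') (v * v') :=
  (h.mul_right u').trans (h'.mul_left v)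

theorem conj (h : NearMod T K u v) (g : G) : NearMod T K (g * u * g⁻¹) (g * v * g⁻¹) :=
  (h.mul_left g).mul_right g⁻¹

theorem mem_iff {N : Subgroup G} [N.Normal] (hT : T ⊆ N) (h : NearMod T K u v) :
    u ∈ N ↔ v ∈ N := by
  have huv : u * v⁻¹ ∈ N := IsConjProd.mem_of_subset (fun _ => hT) h
  rw [← N.mul_mem_cancel_left huv (y := v), inv_mul_cancel_right]

theorem mem_iff_of_conj {N : Subgroup G} [hN : N.Normal] {g : G} (hT : T ⊆ N)
    (h : NearMod T K u (g * v * g⁻¹)) : u ∈ N ↔ v ∈ N := by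
  rw [h.mem_iff hT, hN.mem_comm_iff, inv_mul_cancel_left]

end NearMod

theorem mem_normalClosure_iff_exists_nearMod :
    u ∈ Subgroup.normalClosure T ↔ ∃ K, NearMod T K u 1 := by
  constructor
  · intro hu
    induction hu using Subgroup.closure_induction with
    | mem u hu =>
      obtain ⟨r, hr, hconj⟩ := Group.mem_conjugatesOfSet_iff.1 hu
      obtain ⟨g, rfl⟩ := isConj_iff.1 hconj
      exact ⟨1, by simpa using (NearMod.of_mem hr).conj g⟩
    | one => exact ⟨0, .refl T 0 1⟩
    | mul u v _ _ hu hv =>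
      obtain ⟨⟨K, hu⟩, K', hv⟩ := And.intro hu hv
      exact ⟨K + K', by simpa using hu.mul hv⟩
    | inv u _ hu =>
      obtain ⟨K, hu⟩ := hu
      exact ⟨K, by simpa using hu.symm.mul_left u⁻¹⟩
  · rintro ⟨K, hK⟩
    exact (hK.mem_iff Subgroup.subset_normalClosure).2 (one_mem _)

theorem mk_eq_mk_iff_exists_nearMod :
    (u : G ⧸ Subgroup.normalClosure T) = v ↔ ∃ K, NearMod T K u v := by
  rw [QuotientGroup.eq_iff_div_mem, div_eq_mul_inv, mem_normalClosure_iff_exists_nearMod]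
  simp [NearMod]

theorem exists_forall_nearMod_of_finite {ι : Type*} [Finite ι] (u v : ι → G)
    (h : ∀ i, (u i : G ⧸ Subgroup.normalClosure T) = v i) : ∃ K, ∀ i, NearMod T K (u i) (v i) := by
  choose K hK using fun i => mk_eq_mk_iff_exists_nearMod.1 (h i)
  obtain ⟨M, hM⟩ := (Set.finite_range K).bddAbove
  exact ⟨M, fun i => (hK i).mono (hM ⟨i, rfl⟩)⟩

/-- Returning to the representative after every move costs a bounded amount, as only finitely many
pairs of a representative and a move occur. -/
theorem exists_forall_nearMod_out {Y : Type*} [Finite Y] (state : List Y → G) (move : Y → G → G)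
    (hstate : ∀ y w, state (y :: w) = move y (state w))
    (hmove : ∀ y K u v, NearMod T K u v → NearMod T K (move y u) (move y v))
    (hfinite : (Set.range fun w => (state w : G ⧸ Subgroup.normalClosure T)).Finite) :
    ∃ K, ∀ w, NearMod T (K * (w.length + 1)) (state w)
      (state w : G ⧸ Subgroup.normalClosure T).out := by
  have := hfinite.to_subtype
  obtain ⟨K₀, hstart⟩ := mk_eq_mk_iff_exists_nearMod.1
    (QuotientGroup.out_eq' (state [] : G ⧸ Subgroup.normalClosure T)).symm
  obtain ⟨K₁, hstep⟩ := exists_forall_nearMod_of_finite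
    (ι := (Set.range fun w => (state w : G ⧸ Subgroup.normalClosure T)) × Y)
    (fun p => move p.2 p.1.1.out)
    (fun p => (move p.2 p.1.1.out : G ⧸ Subgroup.normalClosure T).out)
    (fun p => (QuotientGroup.out_eq' _).symm)
  refine ⟨K₀ + K₁, fun w => ?_⟩
  induction w with
  | nil => exact hstart.mono (by simp)
  | cons y w ih =>
    have hnear := hmove y _ _ _ ih
    have hsame := mk_eq_mk_iff_exists_nearMod.2 ⟨_, hnear⟩
    have hnext := hnear.trans (hstep (⟨_, w, rfl⟩, y))
    rw [← hsame, ← hstate] at hnext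
    refine hnext.mono ?_
    simp only [List.length_cons]
    nlinarith

end NearMod

section Words

instance : Fintype L4 := ⟨{.a, .b, .c, .d}, fun y => by cases y <;> decide⟩

@[simp] theorem of_a : FreeGroup.of L4.a = ga := rfl
@[simp] theorem of_b : FreeGroup.of L4.b = gb := rfl
@[simp] theorem of_c : FreeGroup.of L4.c = gc := rfl
@[simp] theorem of_d : FreeGroup.of L4.d = gd := rfl

@[simp] theorem sigma_ga : sigma ga = ga * gc * ga := FreeGroup.lift_apply_of
@[simp] theorem sigma_gb : sigma gb = gd := FreeGroup.lift_apply_of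
@[simp] theorem sigma_gc : sigma gc = gb := FreeGroup.lift_apply_of
@[simp] theorem sigma_gd : sigma gd = gc := FreeGroup.lift_apply_of

/-- The element of `F4` spelled by a positive word. -/
def evalWord (w : List L4) : F4 := (w.map FreeGroup.of).prod

@[simp] theorem evalWord_nil : evalWord [] = 1 := rfl

@[simp] theorem evalWord_cons (y : L4) (w : List L4) :
    evalWord (y :: w) = FreeGroup.of y * evalWord w := by
  simp [evalWord]

@[simp] theorem evalWord_append (v w : List L4) :
    evalWord (v ++ w) = evalWord v * evalWord w := by
  simp [evalWord]

end Words

section Relations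

variable {G : Type*} [Group G] {f : F4 →* G}

theorem mul_self_mul_cancel {x : G} (hx : x * x = 1) (y : G) : x * (x * y) = y := by
  rw [← mul_assoc, hx, one_mul]

theorem commute_of_mul_self_eq_one {x y : G} (hx : x * x = 1) (hy : y * y = 1)
    (hxy : (x * y) * (x * y) = 1) : Commute x y := by
  rw [commute_iff_eq, eq_inv_of_mul_eq_one_left hxy, mul_inv_rev, inv_eq_of_mul_eq_one_left hx,
    inv_eq_of_mul_eq_one_left hy]

theorem map_ga_mul_self (hf : ShStar 0 ⊆ f.ker) : f ga * f ga = 1 := by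
  rw [← map_mul, ← pow_two]; exact hf (by simp [ShStar])

theorem map_gb_mul_self (hf : ShStar 0 ⊆ f.ker) : f gb * f gb = 1 := by
  rw [← map_mul, ← pow_two]; exact hf (by simp [ShStar])

theorem map_gc_mul_self (hf : ShStar 0 ⊆ f.ker) : f gc * f gc = 1 := by
  rw [← map_mul, ← pow_two]; exact hf (by simp [ShStar])

theorem map_gd_mul_self (hf : ShStar 0 ⊆ f.ker) : f gd * f gd = 1 := by
  rw [← map_mul, ← pow_two]; exact hf (by simp [ShStar])

theorem map_of_mul_self (hf : ShStar 0 ⊆ f.ker) (y : L4) :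
    f (FreeGroup.of y) * f (FreeGroup.of y) = 1 := by
  cases y
  exacts [map_ga_mul_self hf, map_gb_mul_self hf, map_gc_mul_self hf, map_gd_mul_self hf]

theorem map_of_inv (hf : ShStar 0 ⊆ f.ker) (y : L4) :
    (f (FreeGroup.of y))⁻¹ = f (FreeGroup.of y) :=
  inv_eq_of_mul_eq_one_left (map_of_mul_self hf y)

theorem map_gb_mul_map_gc_mul_map_gd (hf : ShStar 0 ⊆ f.ker) : f gb * f gc * f gd = 1 := by
  rw [← map_mul, ← map_mul]; exact hf (by simp [ShStar])

theorem map_ga_mul_map_gd_pow_four (hf : ShStar 0 ⊆ f.ker) : (f ga * f gd) ^ 4 = 1 := by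
  rw [← map_mul, ← map_pow]; exact hf (by simp [ShStar])

theorem map_gb_eq_map_gc_mul_map_gd (hf : ShStar 0 ⊆ f.ker) : f gb = f gc * f gd :=
  (map_of_inv hf .b).symm.trans <| inv_eq_of_mul_eq_one_right <| by
    simpa [mul_assoc] using map_gb_mul_map_gc_mul_map_gd hf

theorem commute_map_gc_map_gd (hf : ShStar 0 ⊆ f.ker) : Commute (f gc) (f gd) :=
  commute_of_mul_self_eq_one (map_gc_mul_self hf) (map_gd_mul_self hf)
    (by simpa only [map_gb_eq_map_gc_mul_map_gd hf] using map_gb_mul_self hf)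

end Relations

section Dihedral

variable {G : Type*} [Group G]

/-- The homomorphism `i ↦ x ^ i` on `ZMod n` for an element with `x ^ n = 1`. -/
def zmodPow {n : ℕ} {x : G} (hx : x ^ n = 1) : ZMod n →+ Additive G :=
  ZMod.lift n ⟨zmultiplesHom (Additive G) (.ofMul x), by
    rw [zmultiplesHom_apply, natCast_zsmul, ← ofMul_pow, hx, ofMul_one]⟩

theorem zmodPow_intCast {n : ℕ} {x : G} (hx : x ^ n = 1) (k : ℤ) :
    (zmodPow hx k).toMul = x ^ k := by
  simp [zmodPow]

theorem zmodPow_mul_left_involution {n : ℕ} {s t : G} (hs : s * s = 1) (ht : t * t = 1)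
    (hst : (s * t) ^ n = 1) (i : ZMod n) :
    (zmodPow hst i).toMul * s = s * (zmodPow hst (-i)).toMul := by
  obtain ⟨k, rfl⟩ := ZMod.intCast_surjective i
  have hconj : s * (s * t)⁻¹ * s⁻¹ = s * t := by
    simp [inv_eq_of_mul_eq_one_left hs, inv_eq_of_mul_eq_one_left ht, mul_assoc, hs]
  calc (zmodPow hst k).toMul * s
      = (s * (s * t)⁻¹ * s⁻¹) ^ k * s := by rw [zmodPow_intCast, hconj]
    _ = s * (zmodPow hst (-k : ℤ)).toMul := by
      rw [zmodPow_intCast, conj_zpow, inv_zpow', inv_mul_cancel_right]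
    _ = s * (zmodPow hst (-k : ZMod n)).toMul := by rw [Int.cast_neg]

/-- The homomorphism from the dihedral group of order `2 * n` sending the reflections `sr 0` and
`sr 1` to given involutions `s` and `t`. -/
def dihedralLift {n : ℕ} {s t : G} (hs : s * s = 1) (ht : t * t = 1) (hst : (s * t) ^ n = 1) :
    DihedralGroup n →* G :=
  MonoidHom.mk' (fun
    | .r i => (zmodPow hst i).toMul
    | .sr i => s * (zmodPow hst i).toMul) (by
      have hswap := zmodPow_mul_left_involution hs ht hst
      rintro (i | i) (j | j)
      · simp
      · simp only [DihedralGroup.r_mul_sr, ← mul_assoc, hswap]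
        simp [mul_assoc, sub_eq_neg_add]
      · simp [mul_assoc]
      · simp only [DihedralGroup.sr_mul_sr, ← mul_assoc]
        rw [mul_assoc s, hswap, ← mul_assoc, hs, sub_eq_neg_add, map_add]
        simp)

variable {n : ℕ} {s t : G} (hs : s * s = 1) (ht : t * t = 1) (hst : (s * t) ^ n = 1)

@[simp] theorem dihedralLift_sr_zero : dihedralLift hs ht hst (.sr 0) = s := by
  simp [dihedralLift]

@[simp] theorem dihedralLift_sr_one : dihedralLift hs ht hst (.sr 1) = t := by
  have hrotation : (zmodPow hst 1).toMul = s * t := by simpa using zmodPow_intCast hst 1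
  simp [dihedralLift, hrotation, ← mul_assoc, hs]

end Dihedral

section LeftSection

/-- The endomorphism `φ` with `ψ (σ w) = (φ w, w)`, where `ψ` is the wreath recursion of the
Grigorchuk group. -/
def leftSection : F4 →* F4 :=
  FreeGroup.lift fun
    | .a => gd
    | .b => 1
    | .c => ga
    | .d => ga

@[simp] theorem leftSection_ga : leftSection ga = gd := FreeGroup.lift_apply_of
@[simp] theorem leftSection_gb : leftSection gb = 1 := FreeGroup.lift_apply_of
@[simp] theorem leftSection_gc : leftSection gc = ga := FreeGroup.lift_apply_of
@[simp] theorem leftSection_gd : leftSection gd = ga := FreeGroup.lift_apply_of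

/-- The image of `leftSection` modulo the relators `a²`, `d²` and `(ad)⁴`, which present the
dihedral group of order 8 with `a` and `d` as the reflections `sr 0` and `sr 1`. -/
def leftSectionDihedral : F4 →* DihedralGroup 4 :=
  FreeGroup.lift fun
    | .a => .sr 1
    | .b => 1
    | .c => .sr 0
    | .d => .sr 0

@[simp] theorem leftSectionDihedral_ga : leftSectionDihedral ga = .sr 1 := FreeGroup.lift_apply_of
@[simp] theorem leftSectionDihedral_gb : leftSectionDihedral gb = 1 := FreeGroup.lift_apply_of
@[simp] theorem leftSectionDihedral_gc : leftSectionDihedral gc = .sr 0 := FreeGroup.lift_apply_of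
@[simp] theorem leftSectionDihedral_gd : leftSectionDihedral gd = .sr 0 := FreeGroup.lift_apply_of

theorem dihedralGroup_four_pow_four (x : DihedralGroup 4) : x ^ 4 = 1 := by
  revert x; decide

theorem Rinf_subset_ker {G : Type*} [Group G] {f : F4 →* G} (hzero : ShStar 0 ⊆ f.ker)
    (hsigma : ∀ w, w ^ 4 ∈ Rinf → f (sigma w) ^ 4 = 1) : Rinf ⊆ f.ker := by
  have hiterate : ∀ (i : ℕ) (v : F4), (∀ i, sigma^[i] (v ^ 4) ∈ Rinf) → v ^ 4 ∈ ShStar 0 →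
      f (sigma^[i] (v ^ 4)) = 1 := by
    rintro (_ | i) v hv hv0
    · exact hzero hv0
    · rw [Function.iterate_succ_apply', iterate_map_pow, map_pow, map_pow]
      exact hsigma _ (by simpa only [iterate_map_pow] using hv i)
  rintro r ((hr | ⟨i, rfl⟩) | ⟨i, rfl⟩)
  · exact hzero (by simp only [ShStar, Set.mem_insert_iff, Set.mem_singleton_iff] at hr ⊢; tauto)
  · exact hiterate i _ (fun j => .inl (.inr ⟨j, rfl⟩)) (by simp [ShStar])
  · exact hiterate i _ (fun j => .inr ⟨j, rfl⟩) (by simp [ShStar])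

theorem Rinf_subset_ker_leftSectionDihedral : Rinf ⊆ leftSectionDihedral.ker := by
  refine Rinf_subset_ker ?_ fun w _ => dihedralGroup_four_pow_four _
  rintro r (rfl | rfl | rfl | rfl | rfl | rfl | rfl) <;>
  · simp only [SetLike.mem_coe, MonoidHom.mem_ker, map_mul, map_pow]
    decide

variable {G : Type*} [Group G] {f : F4 →* G} (ha : f ga * f ga = 1) (hd : f gd * f gd = 1)
  (had : (f ga * f gd) ^ 4 = 1)

include ha hd had

theorem map_leftSection_eq_dihedralLift (w : F4) :
    f (leftSection w) = dihedralLift ha hd had (leftSectionDihedral w) := by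
  suffices f.comp leftSection = (dihedralLift ha hd had).comp leftSectionDihedral from
    DFunLike.congr_fun this w
  ext y
  cases y <;> simp

theorem map_leftSection_pow_four (w : F4) : f (leftSection w) ^ 4 = 1 := by
  rw [map_leftSection_eq_dihedralLift ha hd had, ← map_pow, dihedralGroup_four_pow_four, map_one]

theorem map_leftSection_eq_one {w : F4} (hw : w ∈ Subgroup.normalClosure Rinf) :
    f (leftSection w) = 1 := by
  have hker := Subgroup.normalClosure_le_normal Rinf_subset_ker_leftSectionDihedral hw
  rw [map_leftSection_eq_dihedralLift ha hd had, MonoidHom.mem_ker.1 hker, map_one]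

end LeftSection

section WreathRecursion

/-- The action of a letter on the two subtrees at the root: only `a` exchanges them. -/
def letterParity : L4 → ℤˣ
  | .a => -1
  | .b => 1
  | .c => 1
  | .d => 1

/-- The section of a letter at the left (`e = 1`) or right (`e = -1`) subtree, as a word:
`b = (a, c)`, `c = (a, d)` and `d = (1, b)`. -/
def letterSection (e : ℤˣ) : L4 → List L4
  | .a => []
  | .b => if e = 1 then [.a] else [.c]
  | .c => if e = 1 then [.a] else [.d]
  | .d => if e = 1 then [] else [.b]

/-- The action of a word on the two subtrees at the root. -/
def wordParity (w : List L4) : ℤˣ := (w.map letterParity).prod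

/-- The section of a word at one of the two subtrees at the root, as a word. -/
def wordSection (e : ℤˣ) : List L4 → List L4
  | [] => []
  | y :: w => letterSection e y ++ wordSection (letterParity y * e) w

theorem wordSection_append (e : ℤˣ) (v w : List L4) :
    wordSection e (v ++ w) = wordSection e v ++ wordSection (wordParity v * e) w := by
  induction v generalizing e with
  | nil => simp [wordSection, wordParity]
  | cons y v ih => simp [wordSection, wordParity, ih, mul_left_comm, mul_assoc]

theorem wordSection_concat (e : ℤˣ) (w : List L4) (y : L4) :
    wordSection e (w ++ [y]) = wordSection e w ++ letterSection (wordParity w * e) y := by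
  simp [wordSection_append, wordSection]

theorem wordParity_concat (w : List L4) (y : L4) :
    wordParity (w ++ [y]) = wordParity w * letterParity y := by
  simp [wordParity]

theorem length_wordSection_le (e : ℤˣ) (w : List L4) :
    (wordSection e w).length ≤ w.countP (· ≠ .a) := by
  induction w generalizing e with
  | nil => simp [wordSection]
  | cons y w ih =>
    have hletter : (letterSection e y).length ≤ if y ≠ .a then 1 else 0 := by
      revert e; cases y <;> decide
    grind [wordSection, ih (letterParity y * e)]

variable {G : Type*} [Group G] (f : F4 →* G)

/-- The wreath recursion `ψ` of the Grigorchuk group, with the sections evaluated under `f`. -/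
def wreathMap : F4 →* G ≀ᵣ ℤˣ :=
  FreeGroup.lift fun y => ⟨fun e => f (evalWord (letterSection e y)), letterParity y⟩

@[simp] theorem wreathMap_of (y : L4) : wreathMap f (FreeGroup.of y) =
    ⟨fun e => f (evalWord (letterSection e y)), letterParity y⟩ :=
  FreeGroup.lift_apply_of

@[simp] theorem wreathMap_ga : wreathMap f ga = ⟨1, -1⟩ := by
  rw [← of_a, wreathMap_of]; ext <;> simp [letterSection, letterParity]

@[simp] theorem wreathMap_gb : wreathMap f gb = ⟨fun e => if e = 1 then f ga else f gc, 1⟩ := by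
  rw [← of_b, wreathMap_of]; simp [letterSection, letterParity, apply_ite evalWord, apply_ite f]

@[simp] theorem wreathMap_gc : wreathMap f gc = ⟨fun e => if e = 1 then f ga else f gd, 1⟩ := by
  rw [← of_c, wreathMap_of]; simp [letterSection, letterParity, apply_ite evalWord, apply_ite f]

@[simp] theorem wreathMap_gd : wreathMap f gd = ⟨fun e => if e = 1 then 1 else f gb, 1⟩ := by
  rw [← of_d, wreathMap_of]; simp [letterSection, letterParity, apply_ite evalWord, apply_ite f]

theorem wreathMap_evalWord (w : List L4) :
    wreathMap f (evalWord w) = ⟨fun e => f (evalWord (wordSection e w)), wordParity w⟩ := by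
  induction w with
  | nil => ext <;> simp [wordSection, wordParity]
  | cons y w ih => ext <;> simp [wordSection, wordParity, ih]

theorem wreathMap_sigma (w : F4) :
    wreathMap f (sigma w) = ⟨fun e => if e = 1 then f (leftSection w) else f w, 1⟩ := by
  let coordinates : F4 →* G ≀ᵣ ℤˣ :=
    .mk' (fun w => ⟨fun e => if e = 1 then f (leftSection w) else f w, 1⟩) fun v w => by
      ext e
      · by_cases he : e = 1 <;> simp [he]
      · simp
  suffices (wreathMap f).comp sigma = coordinates from DFunLike.congr_fun this w
  ext y e
  · rcases Int.units_eq_one_or e with rfl | rfl <;> cases y <;> simp [coordinates]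
  · cases y <;> simp [coordinates]

variable {f}

theorem wreathMap_ga_mul_gd_sq : wreathMap f ((ga * gd) ^ 2) = ⟨fun _ => f gb, 1⟩ := by
  ext e
  · rcases Int.units_eq_one_or e with rfl | rfl <;> simp [pow_two]
  · simp [pow_two]

theorem wreathMap_gadacac_sq (hf : ShStar 0 ⊆ f.ker) :
    wreathMap f ((ga * gd * ga * gc * ga * gc) ^ 2) =
      ⟨fun e => if e = 1 then f gb else f (gd * ga) * f gb * f (ga * gd), 1⟩ := by
  have ha := map_ga_mul_self hf
  have hd := map_gd_mul_self hf
  ext e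
  · rcases Int.units_eq_one_or e with rfl | rfl
    · simp [pow_two, mul_assoc, ha, mul_self_mul_cancel hd]
    · simp [pow_two, mul_assoc]
  · simp [pow_two]

theorem ShStar_zero_subset_ker_wreathMap (hf : ShStar 0 ⊆ f.ker) :
    ShStar 0 ⊆ (wreathMap f).ker := by
  have ha := map_ga_mul_self hf
  have hb := map_gb_mul_self hf
  have hc := map_gc_mul_self hf
  have hd := map_gd_mul_self hf
  have hbcd : f gc * f gd * f gb = 1 := by rw [← map_gb_eq_map_gc_mul_map_gd hf, hb]
  rintro r (rfl | rfl | rfl | rfl | rfl | rfl | rfl)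
  · ext <;> simp [pow_two]
  iterate 3
    ext e
    · rcases Int.units_eq_one_or e with rfl | rfl <;> simp [pow_two, ha, hb, hc, hd]
    · simp [pow_two]
  · ext e
    · rcases Int.units_eq_one_or e with rfl | rfl <;> simp [ha, hbcd]
    · simp
  · rw [SetLike.mem_coe, MonoidHom.mem_ker, pow_mul _ 2 2, map_pow, wreathMap_ga_mul_gd_sq]
    ext <;> simp [pow_two, hb]
  · rw [SetLike.mem_coe, MonoidHom.mem_ker, pow_mul _ 2 2, map_pow, wreathMap_gadacac_sq hf]
    ext e
    · rcases Int.units_eq_one_or e with rfl | rfl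
      · simp [pow_two, hb]
      · simp [pow_two, mul_assoc, mul_self_mul_cancel ha, mul_self_mul_cancel hb,
          mul_self_mul_cancel hd, hd]
    · simp [pow_two]

theorem ShStar_zero_subset_Rinf : ShStar 0 ⊆ Rinf := by
  rintro r (rfl | rfl | rfl | rfl | rfl | rfl | rfl)
  iterate 5 exact .inl (.inl (by simp))
  · exact .inl (.inr ⟨0, rfl⟩)
  · exact .inr ⟨0, rfl⟩

theorem Rinf_subset_ker_wreathMap (hf : Rinf ⊆ f.ker) : Rinf ⊆ (wreathMap f).ker := by
  have hzero := ShStar_zero_subset_Rinf.trans hf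
  refine Rinf_subset_ker (ShStar_zero_subset_ker_wreathMap hzero) fun w hw => ?_
  have hleft : f (leftSection w) ^ 4 = 1 := map_leftSection_pow_four (map_ga_mul_self hzero)
    (map_gd_mul_self hzero) (map_ga_mul_map_gd_pow_four hzero) w
  have hright : f (w ^ 4) = 1 := hf hw
  rw [← map_pow, ← map_pow, wreathMap_sigma]
  ext e <;> simp [hleft, hright]

theorem wreathMap_evalWord_eq_one {w : List L4}
    (hw : evalWord w ∈ Subgroup.normalClosure Rinf) :
    wreathMap (QuotientGroup.mk' (Subgroup.normalClosure Rinf)) (evalWord w) = 1 :=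
  Subgroup.normalClosure_le_normal (Rinf_subset_ker_wreathMap
    (by simpa using Subgroup.subset_normalClosure)) hw

theorem wordParity_eq_one {w : List L4}
    (hw : evalWord w ∈ Subgroup.normalClosure Rinf) :
    wordParity w = 1 := by
  simpa [wreathMap_evalWord] using
    congrArg RegularWreathProduct.right (wreathMap_evalWord_eq_one hw)

theorem evalWord_wordSection_mem {w : List L4}
    (hw : evalWord w ∈ Subgroup.normalClosure Rinf) (e : ℤˣ) :
    evalWord (wordSection e w) ∈ Subgroup.normalClosure Rinf := by
  simpa [wreathMap_evalWord] using
    congrFun (congrArg RegularWreathProduct.left (wreathMap_evalWord_eq_one hw)) e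

theorem of_notMem_normalClosure_Rinf (y : L4) :
    FreeGroup.of y ∉ Subgroup.normalClosure Rinf := by
  have parity_and_sections (z : L4) (hz : FreeGroup.of z ∈ Subgroup.normalClosure Rinf) :
      letterParity z = 1 ∧
        ∀ e, evalWord (letterSection e z) ∈ Subgroup.normalClosure Rinf := by
    have hz' : evalWord [z] ∈ Subgroup.normalClosure Rinf := by simpa using hz
    exact ⟨by simpa [wordParity] using wordParity_eq_one hz',
      fun e => by simpa [wordSection] using evalWord_wordSection_mem hz' e⟩
  have ha : ga ∉ Subgroup.normalClosure Rinf := fun h =>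
    absurd (parity_and_sections .a h).1 (by decide)
  have hb : gb ∉ Subgroup.normalClosure Rinf := fun h =>
    ha (by simpa [letterSection] using (parity_and_sections .b h).2 1)
  have hc : gc ∉ Subgroup.normalClosure Rinf := fun h =>
    ha (by simpa [letterSection] using (parity_and_sections .c h).2 1)
  have hd : gd ∉ Subgroup.normalClosure Rinf := fun h =>
    hb (by simpa [letterSection] using (parity_and_sections .d h).2 (-1))
  cases y <;> assumption

end WreathRecursion

section Commutation

/-- The relators of height at most `1`. -/
def lowRelators : Set F4 := ShStar 0 ∪ ShStar 1

theorem lowRelators_subset_normalClosure_Rinf :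
    lowRelators ⊆ Subgroup.normalClosure Rinf := by
  have hzero : ShStar 0 ⊆ (QuotientGroup.mk' (Subgroup.normalClosure Rinf)).ker := by
    simpa using ShStar_zero_subset_Rinf.trans Subgroup.subset_normalClosure
  rintro r (hr | rfl | rfl | rfl)
  · exact Subgroup.subset_normalClosure (ShStar_zero_subset_Rinf hr)
  · exact Subgroup.subset_normalClosure (.inl (.inr ⟨1, rfl⟩))
  · exact Subgroup.subset_normalClosure (.inr ⟨1, rfl⟩)
  · rw [SetLike.mem_coe, ← QuotientGroup.ker_mk' (Subgroup.normalClosure Rinf), MonoidHom.mem_ker]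
    simp only [zero_add, Function.iterate_one, sigma_ga, map_mul, pow_two, mul_assoc,
      map_ga_mul_self hzero, mul_self_mul_cancel (map_ga_mul_self hzero),
      mul_self_mul_cancel (map_gc_mul_self hzero)]

/-- The endomorphism `w ↦ a σ(w) a⁻¹`, whose wreath recursion is that of `σ` with the two
coordinates exchanged. -/
def sigmaConj : F4 →* F4 := (MulAut.conj ga).toMonoidHom.comp sigma

theorem sigmaConj_apply (w : F4) : sigmaConj w = ga * sigma w * ga⁻¹ := rfl

theorem exists_eq_reflection_pow_mul_dihedralGroup_four (x : DihedralGroup 4) :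
    ∃ i j : Fin 2, x = .sr 0 ^ i.val * 1 * .sr 1 ^ j.val ∨
      x = .sr 0 ^ i.val * (.sr 1 * .sr 0) * .sr 1 ^ j.val := by
  revert x; decide

variable {G : Type*} [Group G] {f : F4 →* G}

theorem dihedral_relations_comp_sigma (hf : lowRelators ⊆ f.ker) :
    f.comp sigma ga * f.comp sigma ga = 1 ∧ f.comp sigma gd * f.comp sigma gd = 1 ∧
      (f.comp sigma ga * f.comp sigma gd) ^ 4 = 1 := by
  refine ⟨?_, ?_, ?_⟩
  · rw [← map_mul, ← pow_two]; exact hf (.inr (by simp [ShStar]))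
  · simpa using map_gc_mul_self (Set.subset_union_left.trans hf)
  · rw [← map_mul, ← map_pow]; exact hf (.inr (by simp [ShStar]))

theorem map_sigma_leftSection_eq_one (hf : lowRelators ⊆ f.ker) {w : F4}
    (hw : w ∈ Subgroup.normalClosure Rinf) : f (sigma (leftSection w)) = 1 :=
  have ⟨ha, hd, had⟩ := dihedral_relations_comp_sigma hf
  map_leftSection_eq_one (f := f.comp sigma) ha hd had hw

theorem exists_map_sigma_leftSection_eq (hf : lowRelators ⊆ f.ker) :
    ∃ θ : DihedralGroup 4 →* G, θ (.sr 0) = f (ga * gc * ga) ∧ θ (.sr 1) = f gc ∧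
      ∀ w, f (sigma (leftSection w)) = θ (leftSectionDihedral w) := by
  obtain ⟨ha, hd, had⟩ := dihedral_relations_comp_sigma hf
  exact ⟨dihedralLift ha hd had, by simp, by simp,
    map_leftSection_eq_dihedralLift (f := f.comp sigma) ha hd had⟩

theorem commute_map_ada_map_gd (hf : ShStar 0 ⊆ f.ker) : Commute (f (ga * gd * ga)) (f gd) := by
  have ha := map_ga_mul_self hf
  have hd := map_gd_mul_self hf
  refine commute_of_mul_self_eq_one ?_ hd ?_
  · simp [mul_assoc, mul_self_mul_cancel ha, mul_self_mul_cancel hd, ha]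
  · simpa [pow_succ, mul_assoc] using map_ga_mul_map_gd_pow_four hf

theorem commute_map_ada_map_aca (hf : ShStar 0 ⊆ f.ker) :
    Commute (f (ga * gd * ga)) (f (ga * gc * ga)) := by
  have ha := map_ga_mul_self hf
  simp only [commute_iff_eq, map_mul, mul_assoc, mul_self_mul_cancel ha]
  rw [(commute_map_gc_map_gd hf).symm.left_comm]

theorem commute_map_ada_conj_map_gd (hf : ShStar 0 ⊆ f.ker) :
    Commute (f (ga * gd * ga)) (f (gc * (ga * gc * ga)) * f gd * (f (gc * (ga * gc * ga)))⁻¹) := by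
  have ha := map_ga_mul_self hf
  have hd := map_gd_mul_self hf
  have hrelator : f ((ga * gd * ga * gc * ga * gc) ^ 4) = 1 := hf (by simp [ShStar])
  refine commute_of_mul_self_eq_one ?_ ?_ ?_
  · simp [mul_assoc, mul_self_mul_cancel ha, mul_self_mul_cancel hd, ha]
  · simp [mul_assoc, mul_self_mul_cancel hd]
  · have ha' : (f ga)⁻¹ = f ga := map_of_inv hf .a
    have hc' : (f gc)⁻¹ = f gc := map_of_inv hf .c
    simpa [pow_succ, mul_assoc, ha', hc'] using hrelator

theorem commute_map_ada_conj_leftSection (hf : lowRelators ⊆ f.ker) (w : F4) :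
    Commute (f (ga * gd * ga))
      (f (sigma (leftSection w)) * f gd * (f (sigma (leftSection w)))⁻¹) := by
  have hf0 : ShStar 0 ⊆ f.ker := Set.subset_union_left.trans hf
  obtain ⟨θ, hθ0, hθ1, hθ⟩ := exists_map_sigma_leftSection_eq hf
  have hcoset (i j : ℕ) (x : DihedralGroup 4)
      (hx : Commute (f (ga * gd * ga)) (θ x * f gd * (θ x)⁻¹)) :
      Commute (f (ga * gd * ga)) (θ (.sr 0 ^ i * x * .sr 1 ^ j) * f gd *
        (θ (.sr 0 ^ i * x * .sr 1 ^ j))⁻¹) := by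
    have hd : f gc ^ j * f gd * (f gc ^ j)⁻¹ = f gd :=
      ((commute_map_gc_map_gd hf0).pow_left j).mul_inv_cancel
    have haca := (commute_map_ada_map_aca hf0).pow_right i
    have hconj : θ (.sr 0 ^ i * x * .sr 1 ^ j) * f gd * (θ (.sr 0 ^ i * x * .sr 1 ^ j))⁻¹ =
        f (ga * gc * ga) ^ i * (θ x * (f gc ^ j * f gd * (f gc ^ j)⁻¹) * (θ x)⁻¹) *
          (f (ga * gc * ga) ^ i)⁻¹ := by
      simp only [map_mul θ, map_pow θ, hθ0, hθ1, mul_inv_rev, mul_assoc]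
    rw [hconj, hd]
    exact (haca.mul_right hx).mul_right haca.inv_right
  rw [hθ]
  obtain ⟨i, j, hx | hx⟩ :=
    exists_eq_reflection_pow_mul_dihedralGroup_four (leftSectionDihedral w) <;> rw [hx]
  · exact hcoset i j 1 (by simpa using commute_map_ada_map_gd hf0)
  · refine hcoset i j _ ?_
    simpa only [map_mul θ, hθ0, hθ1, ← map_mul f] using commute_map_ada_conj_map_gd hf0

theorem exists_map_sigmaConj_of_eq (hf : ShStar 0 ⊆ f.ker) (y : L4) :
    ∃ n : ℕ, f (sigmaConj (FreeGroup.of y)) =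
      f (sigma (leftSection (FreeGroup.of y))) * f (ga * gd * ga) ^ n := by
  have ha := map_ga_mul_self hf
  have ha' : (f ga)⁻¹ = f ga := map_of_inv hf .a
  refine ⟨if y = .b ∨ y = .c then 1 else 0, ?_⟩
  cases y <;>
    simp [sigmaConj_apply, ha', mul_self_mul_cancel ha, map_gb_eq_map_gc_mul_map_gd hf, mul_assoc]

theorem conj_eq_conj_of_commute {d e p u v : G} (huv : u * d * u⁻¹ = v * d * v⁻¹)
    (hcomm : Commute e (v * d * v⁻¹)) :
    p * e * u * d * (p * e * u)⁻¹ = p * v * d * (p * v)⁻¹ :=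
  calc p * e * u * d * (p * e * u)⁻¹
      = p * (e * (u * d * u⁻¹) * e⁻¹) * p⁻¹ := by simp only [mul_inv_rev, mul_assoc]
    _ = p * (v * d * v⁻¹) * p⁻¹ := by rw [huv, hcomm.mul_inv_cancel]
    _ = p * v * d * (p * v)⁻¹ := by simp only [mul_inv_rev, mul_assoc]

theorem map_sigmaConj_conj_gd (hf : lowRelators ⊆ f.ker) (w : List L4) :
    f (sigmaConj (evalWord w) * gd * (sigmaConj (evalWord w))⁻¹) =
      f (sigma (leftSection (evalWord w)) * gd * (sigma (leftSection (evalWord w)))⁻¹) := by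
  induction w with
  | nil => simp
  | cons y w ih =>
    obtain ⟨n, hy⟩ := exists_map_sigmaConj_of_eq (Set.subset_union_left.trans hf) y
    have hcomm := (commute_map_ada_conj_leftSection hf (evalWord w)).pow_left n
    simp only [evalWord_cons, map_mul sigmaConj, map_mul leftSection, map_mul sigma,
      map_mul f _ gd, map_mul f _ (_⁻¹), map_inv f] at ih ⊢
    simp only [map_mul f (sigmaConj _) (sigmaConj _), map_mul f (sigma _) (sigma _), hy]
    exact conj_eq_conj_of_commute ih hcomm

end Commutation

section LinearEstimates

/-- The element `σ(φ(w))⁻¹ · aσ(w)a⁻¹`, whose wreath recursion has trivial right coordinate. -/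
def leftSupported (w : F4) : F4 := (sigma (leftSection w))⁻¹ * sigmaConj w

theorem lowRelators_subset_ker_mk' :
    lowRelators ⊆ (QuotientGroup.mk' (Subgroup.normalClosure lowRelators)).ker := by
  simpa using Subgroup.subset_normalClosure

theorem finite_range_mk_sigma_leftSection {X : Type*}
    (g : F4 ⧸ Subgroup.normalClosure lowRelators → X) :
    (Set.range fun w : List L4 =>
      g (sigma (leftSection (evalWord w)) : F4)).Finite := by
  obtain ⟨θ, -, -, hθ⟩ := exists_map_sigma_leftSection_eq lowRelators_subset_ker_mk'
  refine (Set.finite_range fun x => g (θ x)).subset ?_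
  rintro _ ⟨w, rfl⟩
  exact ⟨leftSectionDihedral (evalWord w), congrArg g (hθ _).symm⟩

theorem exists_forall_nearMod_leftSupported_mul_gd :
    ∃ K, ∀ w : List L4, NearMod lowRelators (K * (w.length + 1))
      (leftSupported (evalWord w) * gd) (gd * leftSupported (evalWord w)) := by
  let conjBy (θ : F4 →* F4) (w : List L4) : F4 := θ (evalWord w) * gd * (θ (evalWord w))⁻¹
  have hconjBy (θ : F4 →* F4) (y : L4) (w : List L4) :
      conjBy θ (y :: w) = θ (.of y) * conjBy θ w * (θ (.of y))⁻¹ := by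
    simp [conjBy, mul_assoc]
  have hfinite : (Set.range fun w =>
      (conjBy (sigma.comp leftSection) w : F4 ⧸ Subgroup.normalClosure lowRelators)).Finite :=
    finite_range_mk_sigma_leftSection (g := fun x => x * (gd : F4) * x⁻¹)
  have hsame (w : List L4) : (conjBy sigmaConj w : F4 ⧸ Subgroup.normalClosure lowRelators) =
      (conjBy (sigma.comp leftSection) w : F4) :=
    map_sigmaConj_conj_gd lowRelators_subset_ker_mk' w
  obtain ⟨K, hK⟩ := exists_forall_nearMod_out (conjBy (sigma.comp leftSection))
    (fun y u => _ * u * _) (hconjBy _) (fun y K u v h => h.conj _) hfinite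
  obtain ⟨K', hK'⟩ := exists_forall_nearMod_out (conjBy sigmaConj)
    (fun y u => _ * u * _) (hconjBy _) (fun y K u v h => h.conj _)
    (by rwa [funext hsame])
  refine ⟨K + K', fun w => ?_⟩
  have hnear := (hK w).trans (hsame w ▸ hK' w).symm
  have := (hnear.symm.mul_right (sigmaConj (evalWord w))).mul_left
    (sigma (leftSection (evalWord w)))⁻¹
  refine NearMod.mono ?_ (add_mul K K' _).ge
  simpa [conjBy, leftSupported, mul_assoc] using this

theorem exists_forall_nearMod_leftSupported_sigmaConj :
    ∃ K, ∀ w : List L4, evalWord w ∈ Subgroup.normalClosure Rinf →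
      NearMod lowRelators (K * (w.length + 1))
        (leftSupported (evalWord w)) (sigmaConj (evalWord w)) := by
  obtain ⟨K, hK⟩ := exists_forall_nearMod_out (T := lowRelators)
    (fun w : List L4 => sigma (leftSection (evalWord w)))
    (fun y u => sigma (leftSection (.of y)) * u) (by simp) (fun y K u v h => h.mul_left _)
    (finite_range_mk_sigma_leftSection id)
  refine ⟨K + K, fun w hw => ?_⟩
  have htrivial : ((sigma (leftSection (evalWord w)) : F4) :
      F4 ⧸ Subgroup.normalClosure lowRelators) = (sigma (leftSection (evalWord [])) : F4) := by
    simpa using map_sigma_leftSection_eq_one lowRelators_subset_ker_mk' hw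
  have hone := (hK w).trans (htrivial ▸ hK []).symm
  have := (hone.symm.mul_left (sigma (leftSection (evalWord w)))⁻¹).mul_right
    (sigmaConj (evalWord w))
  refine NearMod.mono (by simpa [leftSupported] using this) ?_
  nlinarith

end LinearEstimates

section QuadraticEstimate

/-- The representative `1` or `a` of the coset of the level stabilizer of a given parity. -/
def parityRep (p : ℤˣ) : F4 := if p = 1 then 1 else ga

/-- The factor `(1, b) = d` or `1` by which the letter `y`, read at parity `p`, differs from the
image under `sigmaConj` of its left section. -/
def letterCorrection (p : ℤˣ) (y : L4) : F4 := if p = 1 ∧ (y = .b ∨ y = .d) then gd else 1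

variable {G : Type*} [Group G] {f : F4 →* G}

theorem map_parityRep_mul_of (hf : ShStar 0 ⊆ f.ker) (p : ℤˣ) (y : L4) :
    f (parityRep p * FreeGroup.of y) = f (letterCorrection p y *
      sigmaConj (evalWord (letterSection p y)) * parityRep (p * letterParity y)) := by
  have ha := map_ga_mul_self hf
  have hcd := (commute_map_gc_map_gd hf).eq
  rcases Int.units_eq_one_or p with rfl | rfl <;> cases y <;>
    simp [parityRep, letterCorrection, letterSection, letterParity, sigmaConj_apply, ha,
      mul_self_mul_cancel ha, map_gb_eq_map_gc_mul_map_gd hf, hcd, mul_assoc]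

theorem map_letterCorrection (hf : ShStar 0 ⊆ f.ker) (p : ℤˣ) (y : L4) :
    f (letterCorrection p y) = f (sigma (evalWord (letterSection (-p) y)) *
      (sigma (leftSection (evalWord (letterSection p y))))⁻¹) := by
  have hcd := (commute_map_gc_map_gd hf).eq
  rcases Int.units_eq_one_or p with rfl | rfl <;> cases y <;>
    simp [letterCorrection, letterSection, map_gb_eq_map_gc_mul_map_gd hf, hcd, mul_assoc]

theorem leftSupported_mul (v w : F4) :
    leftSupported (v * w) = (sigma (leftSection w))⁻¹ * leftSupported v * sigmaConj w := by
  simp [leftSupported, mul_assoc]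

/-- The element with the same parity and, up to relations, the same sections as the word `w`. -/
def sectionForm (w : List L4) : F4 :=
  sigma (evalWord (wordSection (-1) w)) * leftSupported (evalWord (wordSection 1 w)) *
    parityRep (wordParity w)

theorem exists_forall_nearMod_sectionForm_concat :
    ∃ K, ∀ w y, NearMod lowRelators (K * (w.length + 1))
      (sectionForm w * FreeGroup.of y) (sectionForm (w ++ [y])) := by
  have hzero := Set.subset_union_left.trans lowRelators_subset_ker_mk'
  obtain ⟨K₁, hletter⟩ := exists_forall_nearMod_of_finite (ι := ℤˣ × L4) _ _
    fun i => map_parityRep_mul_of hzero i.1 i.2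
  obtain ⟨K₂, hcorrection⟩ := exists_forall_nearMod_of_finite (ι := ℤˣ × L4) _ _
    fun i => map_letterCorrection hzero i.1 i.2
  obtain ⟨K₃, hcomm⟩ := exists_forall_nearMod_leftSupported_mul_gd
  refine ⟨K₁ + K₃ + K₂, fun w y => ?_⟩
  set p := wordParity w with hp
  set U := sigma (evalWord (wordSection (-1) w))
  set Z := leftSupported (evalWord (wordSection 1 w))
  have hread := (hletter (p, y)).mul_left (U * Z)
  have hswap : NearMod lowRelators (K₃ * (w.length + 1))
      (Z * letterCorrection p y) (letterCorrection p y * Z) := by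
    rw [letterCorrection]
    split_ifs
    · have hlength := (length_wordSection_le 1 w).trans List.countP_le_length
      exact (hcomm _).mono (by gcongr)
    · simpa using NearMod.refl _ _ Z
  have hmove := ((hswap.trans ((hcorrection (p, y)).mul_right Z)).mul_left U).mul_right
    (sigmaConj (evalWord (letterSection p y)) * parityRep (p * letterParity y))
  simp only [mul_assoc] at hread hmove
  refine NearMod.mono (K := K₁ + (K₃ * (w.length + 1) + K₂)) ?_ (by nlinarith)
  simpa [sectionForm, wordSection_concat, wordParity_concat, leftSupported_mul, mul_assoc, ← hp]
    using hread.trans hmove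

theorem exists_forall_nearMod_sectionForm :
    ∃ K, ∀ w : List L4, NearMod lowRelators (K * (w.length + 1) ^ 2) (evalWord w)
      (sectionForm w) := by
  obtain ⟨K, hconcat⟩ := exists_forall_nearMod_sectionForm_concat
  refine ⟨K, fun w => ?_⟩
  induction w using List.reverseRecOn with
  | nil =>
    simpa [sectionForm, wordSection, wordParity, parityRep, leftSupported] using NearMod.refl _ _ 1
  | append_singleton w y ih =>
    rw [evalWord_append, evalWord_cons, evalWord_nil, mul_one]
    refine ((ih.mul_right (.of y)).trans (hconcat w y)).mono ?_
    rw [List.length_append, List.length_singleton, ← mul_add]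
    gcongr
    nlinarith

theorem exists_forall_nearMod_sigma_mul_sigmaConj :
    ∃ K, ∀ w : List L4, evalWord w ∈ Subgroup.normalClosure Rinf →
      NearMod lowRelators (K * (w.length + 1) ^ 2) (evalWord w)
        (sigma (evalWord (wordSection (-1) w)) * sigmaConj (evalWord (wordSection 1 w))) := by
  obtain ⟨K, hsections⟩ := exists_forall_nearMod_sectionForm
  obtain ⟨K', hleft⟩ := exists_forall_nearMod_leftSupported_sigmaConj
  refine ⟨K + K', fun w hw => ?_⟩
  have hsectionForm : sectionForm w =
      sigma (evalWord (wordSection (-1) w)) * leftSupported (evalWord (wordSection 1 w)) := by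
    simp [sectionForm, parityRep, wordParity_eq_one hw]
  have hlength := (length_wordSection_le 1 w).trans List.countP_le_length
  refine ((hsectionForm ▸ hsections w).trans
    ((hleft _ (evalWord_wordSection_mem hw 1)).mul_left _)).mono ?_
  rw [add_mul]
  gcongr
  nlinarith

end QuadraticEstimate

section Reduction

theorem norm_evalWord_le (w : List L4) : (evalWord w).norm ≤ w.length := by
  induction w with
  | nil => simp
  | cons y w ih =>
    rw [evalWord_cons, List.length_cons, add_comm, ← FreeGroup.norm_of y]
    exact (FreeGroup.norm_mul_le _ _).trans (Nat.add_le_add_left ih _)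

theorem exists_forall_nearMod_evalWord :
    ∃ K, ∀ W : F4, ∃ w : List L4, w.length = W.norm ∧
      NearMod lowRelators (K * W.norm) W (evalWord w) := by
  obtain ⟨K, hinv⟩ := exists_forall_nearMod_of_finite (T := lowRelators) (ι := L4)
    (fun y => (FreeGroup.of y)⁻¹) FreeGroup.of
    (map_of_inv (Set.subset_union_left.trans lowRelators_subset_ker_mk'))
  have hmk (L : List (L4 × Bool)) :
      NearMod lowRelators (K * L.length) (FreeGroup.mk L) (evalWord (L.map Prod.fst)) := by
    induction L with
    | nil => exact .refl _ _ _
    | cons p L ih =>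
      have hletter : NearMod lowRelators K (FreeGroup.mk [p]) (FreeGroup.of p.1) := by
        obtain ⟨y, _ | _⟩ := p
        · exact hinv y
        · exact .refl _ _ _
      rw [← List.singleton_append, ← FreeGroup.mul_mk, List.singleton_append, List.map_cons,
        evalWord_cons]
      exact (hletter.mul ih).mono (by rw [List.length_cons]; linarith)
  exact ⟨K, fun W => ⟨W.toWord.map Prod.fst, by simp [FreeGroup.norm],
    by simpa [FreeGroup.norm, FreeGroup.mk_toWord] using hmk W.toWord⟩⟩

theorem exists_map_of_mul_of_eq_evalWord {G : Type*} [Group G] {f : F4 →* G}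
    (hf : ShStar 0 ⊆ f.ker) {p q : L4} (hp : p ≠ .a) (hq : q ≠ .a) :
    ∃ r : List L4, r.length ≤ 1 ∧ f (FreeGroup.of p * FreeGroup.of q) = f (evalWord r) := by
  have hc := map_gc_mul_self hf
  have hd := map_gd_mul_self hf
  have hb := map_gb_eq_map_gc_mul_map_gd hf
  have hcd := commute_map_gc_map_gd hf
  refine ⟨if p = q then [] else if p ≠ .b ∧ q ≠ .b then [.b] else
    if p ≠ .c ∧ q ≠ .c then [.c] else [.d], by split_ifs <;> simp, ?_⟩
  cases p <;> cases q <;> first | contradiction | skip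
  all_goals simp [hb, hc, hd, ← hcd.eq, ← hcd.left_comm, mul_assoc, mul_self_mul_cancel hc]

theorem exists_forall_nearMod_merge :
    ∃ K, ∀ p q : L4, p ≠ .a → q ≠ .a → ∃ r : List L4, r.length ≤ 1 ∧
      NearMod lowRelators K (FreeGroup.of p * FreeGroup.of q) (evalWord r) := by
  choose r hlength hr using fun s : {s : L4 × L4 // s.1 ≠ .a ∧ s.2 ≠ .a} =>
    exists_map_of_mul_of_eq_evalWord (Set.subset_union_left.trans lowRelators_subset_ker_mk')
      s.2.1 s.2.2
  obtain ⟨K, hK⟩ := exists_forall_nearMod_of_finite _ _ hr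
  exact ⟨K, fun p q hp hq => ⟨_, hlength ⟨(p, q), hp, hq⟩, hK _⟩⟩

theorem two_mul_countP_le_or_exists_adjacent_or_exists_ends {α : Type*} (P : α → Bool) :
    ∀ w : List α, 2 * w.countP P ≤ w.length ∨
      (∃ u p q v, P p ∧ P q ∧ w = u ++ p :: q :: v) ∨
      2 * w.countP P ≤ w.length + 1 ∧
        ((∃ p, P p ∧ w = [p]) ∨ ∃ p u q, P p ∧ P q ∧ w = p :: (u ++ [q]))
  | [] => by simp
  | [y] => by by_cases hy : P y <;> simp [hy]
  | y :: z :: t => by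
    by_cases hy : P y
    · by_cases hz : P z
      · exact .inr (.inl ⟨[], y, z, t, hy, hz, rfl⟩)
      rw [List.countP_cons_of_pos hy, List.countP_cons_of_neg hz]
      simp only [List.length_cons]
      obtain h | ⟨u, p, q, v, hp, hq, rfl⟩ | ⟨h, ⟨p, hp, rfl⟩ | ⟨p, u, q, -, hq, rfl⟩⟩ :=
        two_mul_countP_le_or_exists_adjacent_or_exists_ends P t
      · exact .inl (by linarith)
      · exact .inr (.inl ⟨y :: z :: u, p, q, v, hp, hq, rfl⟩)
      · exact .inr (.inr ⟨by linarith, .inr ⟨y, [z], p, hy, hp, rfl⟩⟩)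
      · exact .inr (.inr ⟨by linarith, .inr ⟨y, z :: p :: u, q, hy, hq, rfl⟩⟩)
    · rw [List.countP_cons_of_neg hy, List.length_cons (a := y)]
      obtain h | ⟨u, p, q, v, hp, hq, hw⟩ | ⟨h, -⟩ :=
        two_mul_countP_le_or_exists_adjacent_or_exists_ends P (z :: t)
      · exact .inl (h.trans (Nat.le_succ _))
      · exact .inr (.inl ⟨y :: u, p, q, v, hp, hq, by rw [hw, List.cons_append]⟩)
      · exact .inl h

theorem exists_forall_balanced_or_exists_shorter :
    ∃ K, ∀ w : List L4, evalWord w ∈ Subgroup.normalClosure Rinf →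
      2 * w.countP (· ≠ .a) ≤ w.length ∨
      ∃ g w', w'.length < w.length ∧
        NearMod lowRelators K (evalWord w) (g * evalWord w' * g⁻¹) := by
  obtain ⟨K, hmerge⟩ := exists_forall_nearMod_merge
  refine ⟨K, fun w hw => ?_⟩
  obtain h | ⟨u, p, q, v, hp, hq, rfl⟩ | ⟨-, ⟨p, -, rfl⟩ | ⟨p, u, q, hp, hq, rfl⟩⟩ :=
    two_mul_countP_le_or_exists_adjacent_or_exists_ends (fun y : L4 => decide (y ≠ .a)) w
  · exact .inl h
  · obtain ⟨r, hr, hnear⟩ := hmerge p q (of_decide_eq_true hp) (of_decide_eq_true hq)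
    refine .inr ⟨1, u ++ (r ++ v), ?_, ?_⟩
    · simp only [List.length_append, List.length_cons]
      omega
    · simpa [mul_assoc] using (hnear.mul_left (evalWord u)).mul_right (evalWord v)
  · exact absurd (by simpa using hw) (of_notMem_normalClosure_Rinf p)
  · obtain ⟨r, hr, hnear⟩ := hmerge q p (of_decide_eq_true hq) (of_decide_eq_true hp)
    refine .inr ⟨FreeGroup.of p, u ++ r, ?_, ?_⟩
    · simp only [List.length_append, List.length_cons]
      omega
    · simpa [mul_assoc] using (hnear.mul_left (evalWord u)).conj (FreeGroup.of p)

theorem exists_forall_exists_balanced :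
    ∃ K, ∀ w : List L4, evalWord w ∈ Subgroup.normalClosure Rinf →
      ∃ g w', w'.length ≤ w.length ∧ 2 * w'.countP (· ≠ .a) ≤ w'.length ∧
        NearMod lowRelators (K * w.length) (evalWord w) (g * evalWord w' * g⁻¹) := by
  obtain ⟨K, hK⟩ := exists_forall_balanced_or_exists_shorter
  refine ⟨K, fun w => ?_⟩
  induction hn : w.length using Nat.strong_induction_on generalizing w with
  | _ n ih =>
    intro hw
    subst hn
    obtain hbalanced | ⟨g, w₁, hlt, hnear⟩ := hK w hw
    · exact ⟨1, w, le_rfl, hbalanced, by simpa using .refl _ _ _⟩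
    have hw₁ := (hnear.mem_iff_of_conj lowRelators_subset_normalClosure_Rinf).1 hw
    obtain ⟨g₁, w', hle, hbalanced, hnear₁⟩ := ih _ hlt w₁ rfl hw₁
    refine ⟨g * g₁, w', hle.trans hlt.le, hbalanced, ?_⟩
    have hchain := hnear.trans (hnear₁.conj g)
    refine NearMod.mono (by simpa [mul_assoc] using hchain) ?_
    nlinarith

theorem exists_forall_nearMod_sections :
    ∃ K, ∀ W ∈ Subgroup.normalClosure Rinf, ∃ g, ∃ W₀ ∈ Subgroup.normalClosure Rinf,
      ∃ W₁ ∈ Subgroup.normalClosure Rinf, 2 * W₀.norm ≤ W.norm ∧ 2 * W₁.norm ≤ W.norm ∧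
        NearMod lowRelators (K * (W.norm + 1) ^ 2) W (g * (sigma W₀ * sigmaConj W₁) * g⁻¹) := by
  obtain ⟨K₁, hword⟩ := exists_forall_nearMod_evalWord
  obtain ⟨K₂, hbalance⟩ := exists_forall_exists_balanced
  obtain ⟨K₃, hsplit⟩ := exists_forall_nearMod_sigma_mul_sigmaConj
  refine ⟨K₁ + K₂ + K₃, fun W hW => ?_⟩
  obtain ⟨w, hlength, hnear₁⟩ := hword W
  have hw := (hnear₁.mem_iff lowRelators_subset_normalClosure_Rinf).1 hW
  obtain ⟨g, w', hle, hbalanced, hnear₂⟩ := hbalance w hw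
  have hw' := (hnear₂.mem_iff_of_conj lowRelators_subset_normalClosure_Rinf).1 hw
  have hsection (e : ℤˣ) : 2 * (evalWord (wordSection e w')).norm ≤ W.norm := by
    have := norm_evalWord_le (wordSection e w')
    have := length_wordSection_le e w'
    omega
  refine ⟨g, _, evalWord_wordSection_mem hw' (-1), _, evalWord_wordSection_mem hw' 1,
    hsection _, hsection _, ?_⟩
  refine ((hnear₁.trans hnear₂).trans ((hsplit w' hw').conj g)).mono ?_
  calc K₁ * W.norm + K₂ * w.length + K₃ * (w'.length + 1) ^ 2
      ≤ K₁ * (W.norm + 1) ^ 2 + K₂ * (W.norm + 1) ^ 2 + K₃ * (W.norm + 1) ^ 2 := by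
        gcongr <;> nlinarith
    _ = (K₁ + K₂ + K₃) * (W.norm + 1) ^ 2 := by ring

end Reduction

section Heights

/-- The heights of the relators into which `σ` turns a relator of height `i`: it raises the height
by one, except that it permutes `b²`, `c²`, `d²` and `bcd` up to conjugation. -/
def sigmaHeights : ℕ → Multiset ℕ
  | 0 => {0, 1}
  | i + 1 => {i + 2}

theorem isConjProd_sigma_of_mem_ShStar :
    ∀ i, ∀ r ∈ ShStar i, IsConjProd ShStar (sigmaHeights i) (sigma r) := by
  rintro (_ | i) r hr
  · have height_zero {s : F4} (hs : s ∈ ShStar 0) : IsConjProd ShStar {0, 1} s :=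
      (IsConjProd.of_mem hs).mono (by simp)
    have height_one {s : F4} (hs : s ∈ ShStar 1) : IsConjProd ShStar {0, 1} s :=
      (IsConjProd.of_mem hs).mono (by simp)
    rcases hr with rfl | rfl | rfl | rfl | rfl | rfl | rfl
    · exact height_one (.inr (.inr rfl))
    iterate 3 exact height_zero (by simp [ShStar])
    · simpa [sigmaHeights, mul_assoc] using
        (height_zero (s := gb * gc * gd) (by simp [ShStar])).conj gd
    · exact height_one (.inl rfl)
    · exact height_one (.inr (.inl rfl))
  · refine IsConjProd.of_mem ?_
    rcases hr with rfl | rfl | rfl <;> simp [ShStar, ← Function.iterate_succ_apply']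

theorem IsConjProd.map_sigma {n : Multiset ℕ} {W : F4} (hW : IsConjProd ShStar n W) :
    IsConjProd ShStar (n.bind sigmaHeights) (sigma W) :=
  hW.map _ _ isConjProd_sigma_of_mem_ShStar

theorem IsConjProd.map_sigmaConj {n : Multiset ℕ} {W : F4} (hW : IsConjProd ShStar n W) :
    IsConjProd ShStar (n.bind sigmaHeights) (sigmaConj W) :=
  hW.map_sigma.conj ga

theorem NearMod.isConjProd_ShStar {K : ℕ} {u v : F4} (h : NearMod lowRelators K u v) :
    IsConjProd ShStar (K • {0, 1}) (u * v⁻¹) := by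
  have hlow : ∀ r ∈ lowRelators, IsConjProd ShStar {0, 1} r := by
    rintro r (hr | hr) <;> exact (IsConjProd.of_mem hr).mono (by simp)
  simpa [Multiset.bind, Multiset.join] using
    IsConjProd.map (MonoidHom.id F4) (fun _ => {0, 1}) (fun _ => hlow) h

theorem count_zero_bind_sigmaHeights (n : Multiset ℕ) :
    (n.bind sigmaHeights).count 0 = n.count 0 := by
  induction n using Multiset.induction with
  | empty => simp
  | cons i n ih => cases i <;> simp [sigmaHeights, ih]

theorem count_one_bind_sigmaHeights (n : Multiset ℕ) :
    (n.bind sigmaHeights).count 1 = n.count 0 := by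
  induction n using Multiset.induction with
  | empty => simp
  | cons i n ih => cases i <;> simp [sigmaHeights, ih]

theorem count_add_two_bind_sigmaHeights (n : Multiset ℕ) (i : ℕ) :
    (n.bind sigmaHeights).count (i + 2) = n.count (i + 1) := by
  induction n using Multiset.induction with
  | empty => simp
  | cons j n ih => cases j <;> simp [sigmaHeights, Multiset.count_cons, ih]

theorem eq_one_of_mem_normalClosure_Rinf_of_norm_le_one {W : F4}
    (hW : W ∈ Subgroup.normalClosure Rinf) (hnorm : W.norm ≤ 1) : W = 1 := by
  obtain hzero | hone := Nat.le_one_iff_eq_zero_or_eq_one.1 hnorm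
  · exact FreeGroup.norm_eq_zero.1 hzero
  · obtain ⟨⟨y, b⟩, hword⟩ := List.length_eq_one_iff.1 hone
    refine absurd ?_ (of_notMem_normalClosure_Rinf y)
    rw [← FreeGroup.mk_toWord (x := W), hword] at hW
    cases b
    · exact inv_mem_iff.1 hW
    · exact hW

theorem IsConjProd.of_sections {K : ℕ} {n₀ n₁ : Multiset ℕ} {g W W₀ W₁ : F4}
    (h₀ : IsConjProd ShStar n₀ W₀) (h₁ : IsConjProd ShStar n₁ W₁)
    (h : NearMod lowRelators K W (g * (sigma W₀ * sigmaConj W₁) * g⁻¹)) :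
    IsConjProd ShStar (K • {0, 1} + (n₀ + n₁).bind sigmaHeights) W := by
  rw [← inv_mul_cancel_right W (g * (sigma W₀ * sigmaConj W₁) * g⁻¹),
    Multiset.add_bind]
  exact h.isConjProd_ShStar.mul ((h₀.map_sigma.mul h₁.map_sigmaConj).conj g)

theorem count_sections_mul_two_pow_le {K b B : ℕ} {n : Multiset ℕ}
    (hn : ∀ i, n.count i * 2 ^ (i - 1) ≤ b) (hlow : K + b ≤ B) (hhigh : 2 * b ≤ B) (i : ℕ) :
    (K • {0, 1} + n.bind sigmaHeights).count i * 2 ^ (i - 1) ≤ B := by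
  have hzero : n.count 0 ≤ b := by simpa using hn 0
  match i with
  | 0 =>
    have : K + n.count 0 ≤ B := by omega
    simpa [Multiset.count_nsmul, count_zero_bind_sigmaHeights] using this
  | 1 =>
    have : K + n.count 0 ≤ B := by omega
    simpa [Multiset.count_nsmul, count_one_bind_sigmaHeights] using this
  | i + 2 =>
    have hdouble : n.count (i + 1) * 2 ^ (i + 1) ≤ B :=
      calc n.count (i + 1) * 2 ^ (i + 1) = 2 * (n.count (i + 1) * 2 ^ (i + 1 - 1)) := by
            rw [Nat.add_sub_cancel, pow_succ]; ring
        _ ≤ 2 * b := Nat.mul_le_mul_left 2 (hn (i + 1))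
        _ ≤ B := hhigh
    simpa [Multiset.count_nsmul, count_add_two_bind_sigmaHeights] using hdouble

theorem count_sections_eq_zero {K l : ℕ} {n : Multiset ℕ} (hn : ∀ i, l < i → n.count i = 0)
    {i : ℕ} (hi : l + 1 < i) : (K • {0, 1} + n.bind sigmaHeights).count i = 0 := by
  obtain ⟨j, rfl⟩ := Nat.exists_eq_add_of_le' (show 2 ≤ i by omega)
  simpa [Multiset.count_nsmul, count_add_two_bind_sigmaHeights] using hn (j + 1) (by omega)

theorem exists_forall_exists_isConjProd_ShStar :
    ∃ C, ∀ x, ∀ W ∈ Subgroup.normalClosure Rinf, W.norm ≤ x →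
      ∃ n, IsConjProd ShStar n W ∧ (∀ i, n.count i * 2 ^ (i - 1) ≤ C * x ^ 2) ∧
        ∀ i, Nat.log 2 x < i → n.count i = 0 := by
  obtain ⟨K, hK⟩ := exists_forall_nearMod_sections
  refine ⟨8 * K, fun x => ?_⟩
  induction x using Nat.strong_induction_on with
  | _ x ih =>
    intro W hW hnorm
    obtain hx | hx := Nat.lt_or_ge x 2
    · rw [eq_one_of_mem_normalClosure_Rinf_of_norm_le_one hW (by omega)]
      exact ⟨0, .one 0, by simp, by simp⟩
    obtain ⟨g, W₀, hW₀, W₁, hW₁, hnorm₀, hnorm₁, hnear⟩ := hK W hW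
    obtain ⟨n₀, hn₀, hcount₀, hlog₀⟩ := ih (x / 2) (by omega) W₀ hW₀ (by omega)
    obtain ⟨n₁, hn₁, hcount₁, hlog₁⟩ := ih (x / 2) (by omega) W₁ hW₁ (by omega)
    have hcost : K * (W.norm + 1) ^ 2 ≤ 4 * K * x ^ 2 :=
      calc K * (W.norm + 1) ^ 2 ≤ K * (2 * x) ^ 2 := by gcongr; omega
        _ = 4 * K * x ^ 2 := by ring
    have hhalf : 2 * (8 * K * (x / 2) ^ 2) ≤ 4 * K * x ^ 2 :=
      calc 2 * (8 * K * (x / 2) ^ 2) = 4 * K * (2 * (x / 2)) ^ 2 := by ring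
        _ ≤ 4 * K * x ^ 2 := by gcongr; omega
    refine ⟨_, hn₀.of_sections hn₁ hnear, count_sections_mul_two_pow_le
      (b := 2 * (8 * K * (x / 2) ^ 2)) (fun i => ?_) (by linarith) (by linarith),
      fun i hi => count_sections_eq_zero (l := Nat.log 2 (x / 2)) (fun i hi => ?_) ?_⟩
    · rw [Multiset.count_add, add_mul, two_mul]
      exact Nat.add_le_add (hcount₀ i) (hcount₁ i)
    · rw [Multiset.count_add, hlog₀ i hi, hlog₁ i hi]
    · rwa [← Nat.log_of_one_lt_of_le one_lt_two hx]

end Heights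

section HeightPartition

/-- The exponent sum in `a`, which `σ` doubles: its 2-adic valuation detects the height. -/
def aExponent : F4 →* Multiplicative ℤ :=
  FreeGroup.lift fun
    | .a => .ofAdd 1
    | _ => 1

/-- The exponent sum in `a` minus the exponent sums in `b`, `c` and `d`. It is invariant under `σ`
and tells apart the families of relators whose values of `aExponent` overlap. -/
def exponentDefect : F4 →* Multiplicative ℤ :=
  FreeGroup.lift fun
    | .a => .ofAdd 1
    | _ => .ofAdd (-1)

@[simp] theorem aExponent_ga : aExponent ga = .ofAdd 1 := FreeGroup.lift_apply_of
@[simp] theorem aExponent_gb : aExponent gb = 1 := FreeGroup.lift_apply_of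
@[simp] theorem aExponent_gc : aExponent gc = 1 := FreeGroup.lift_apply_of
@[simp] theorem aExponent_gd : aExponent gd = 1 := FreeGroup.lift_apply_of

@[simp] theorem exponentDefect_ga : exponentDefect ga = .ofAdd 1 := FreeGroup.lift_apply_of
@[simp] theorem exponentDefect_gb : exponentDefect gb = .ofAdd (-1) := FreeGroup.lift_apply_of
@[simp] theorem exponentDefect_gc : exponentDefect gc = .ofAdd (-1) := FreeGroup.lift_apply_of
@[simp] theorem exponentDefect_gd : exponentDefect gd = .ofAdd (-1) := FreeGroup.lift_apply_of

theorem aExponent_comp_sigma : aExponent.comp sigma = (powMonoidHom 2).comp aExponent := by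
  refine FreeGroup.ext_hom _ _ fun y => ?_
  cases y <;> simp [pow_two]

theorem exponentDefect_comp_sigma : exponentDefect.comp sigma = exponentDefect := by
  refine FreeGroup.ext_hom _ _ fun y => ?_
  cases y <;> simp

theorem aExponent_sigma_iterate (i : ℕ) (w : F4) :
    aExponent (sigma^[i] w) = aExponent w ^ 2 ^ i := by
  induction i with
  | zero => simp
  | succ i ih =>
    rw [Function.iterate_succ_apply', ← MonoidHom.comp_apply, aExponent_comp_sigma,
      MonoidHom.comp_apply, ih, powMonoidHom_apply, ← pow_mul, pow_succ]

theorem exponentDefect_sigma_iterate (i : ℕ) (w : F4) :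
    exponentDefect (sigma^[i] w) = exponentDefect w := by
  induction i with
  | zero => rfl
  | succ i ih =>
    rw [Function.iterate_succ_apply', ← MonoidHom.comp_apply, exponentDefect_comp_sigma, ih]

theorem eq_of_mem_ShStar {i : ℕ} {r : F4} (hr : r ∈ ShStar i) :
    (i = 0 ∧ r ∈ ({gb ^ 2, gc ^ 2, gd ^ 2, gb * gc * gd} : Set F4)) ∨ r = sigma^[i] (ga ^ 2) ∨
      r = sigma^[i] ((ga * gd) ^ 4) ∨ r = sigma^[i] ((ga * gd * ga * gc * ga * gc) ^ 4) := by
  obtain _ | i := i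
  · rcases hr with rfl | rfl | rfl | rfl | rfl | rfl | rfl <;> simp
  · rcases hr with rfl | rfl | rfl <;> simp

theorem padicValInt_two_aExponent_sigma_iterate (i : ℕ) {w : F4} {k m : ℕ}
    (hw : aExponent w = .ofAdd (2 ^ k * m : ℤ)) (hm : Odd m) :
    padicValInt 2 (aExponent (sigma^[i] w)).toAdd = i + k := by
  have hpow : (aExponent (sigma^[i] w)).toAdd = (2 ^ (i + k) * m : ℕ) := by
    rw [aExponent_sigma_iterate, hw, ← ofAdd_nsmul, toAdd_ofAdd, pow_add]
    simp [mul_assoc]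
  rw [hpow, padicValInt.of_nat, padicValNat.mul (by positivity) hm.pos.ne', padicValNat.prime_pow,
    padicValNat.eq_zero_of_not_dvd hm.not_two_dvd_nat, add_zero]

theorem exponents_of_mem_ShStar {i : ℕ} {r : F4} (hr : r ∈ ShStar i) :
    i = 0 ∧ (exponentDefect r).toAdd < 0 ∨
      (exponentDefect r).toAdd = 2 ∧ padicValInt 2 (aExponent r).toAdd = i + 1 ∨
      (exponentDefect r).toAdd = 0 ∧ padicValInt 2 (aExponent r).toAdd = i + 2 := by
  obtain ⟨rfl, rfl | rfl | rfl | rfl⟩ | rfl | rfl | rfl := eq_of_mem_ShStar hr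
  iterate 4 exact .inl (by simp)
  all_goals rw [exponentDefect_sigma_iterate]
  · exact .inr (.inl ⟨by simp, padicValInt_two_aExponent_sigma_iterate i (m := 1) rfl odd_one⟩)
  · exact .inr (.inr ⟨by simp, padicValInt_two_aExponent_sigma_iterate i (m := 1) rfl odd_one⟩)
  · exact .inr (.inr ⟨by simp, padicValInt_two_aExponent_sigma_iterate i (m := 3) rfl (by decide)⟩)

theorem pairwise_disjoint_ShStar : Pairwise (Function.onFun Disjoint ShStar) := by
  refine fun i j hij => Set.disjoint_left.2 fun r hi hj => hij ?_
  have := exponents_of_mem_ShStar hi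
  have := exponents_of_mem_ShStar hj
  omega

theorem ShStar_subset_RinfStar (i : ℕ) : ShStar i ⊆ RinfStar := by
  obtain _ | i := i
  · exact ShStar_zero_subset_Rinf.trans Set.subset_union_left
  · rintro r (rfl | rfl | rfl)
    · exact .inl (.inl (.inr ⟨_, rfl⟩))
    · exact .inl (.inr ⟨_, rfl⟩)
    · exact .inr ⟨_, i.succ_pos, rfl⟩

end HeightPartition

/-- every `W ∈ N(∞)` of length at most `x` admits an expression
as a product of conjugates of powers `±1` of relators of `R*(∞)` whose numbers
of relators of each height are controlled as stated. -/
theorem grigorchuk_hstar_tuple :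
    ∃ C : ℝ, 1 < C ∧
      ∀ x : ℕ, 2 ≤ x →
        ∀ W ∈ Subgroup.normalClosure Rinf, FreeGroup.norm W ≤ x →
          ∃ (L : ℕ) (X R : Fin L → F4) (ε : Fin L → ℤ),
            (∀ j, R j ∈ RinfStar ∧ (ε j = 1 ∨ ε j = -1)) ∧
            W = (List.ofFn fun j => X j * R j ^ ε j * (X j)⁻¹).prod ∧
            (Nat.card {j : Fin L // R j ∈ ShStar 0} : ℝ) ≤ C * (x : ℝ) ^ 2 ∧
            (∀ i : ℕ, 1 ≤ i → (i : ℝ) ≤ Real.logb 2 (x : ℝ) →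
              (Nat.card {j : Fin L // R j ∈ ShStar i} : ℝ) ≤
                C * (x : ℝ) ^ 2 / 2 ^ (i - 1)) ∧
            (∀ j, ∀ i : ℕ, R j ∈ ShStar i → (i : ℝ) ≤ Real.logb 2 (x : ℝ)) := by
  obtain ⟨C, hC⟩ := exists_forall_exists_isConjProd_ShStar
  refine ⟨C + 2, by linarith [C.cast_nonneg (α := ℝ)], fun x _ W hW hnorm => ?_⟩
  obtain ⟨n, hn, hcount, hlog⟩ := hC x W hW hnorm
  obtain ⟨L, X, R, ε, hR, hprod, hcard⟩ := hn.exists_ofFn_card_le pairwise_disjoint_ShStar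
  have hcard_mul (i : ℕ) :
      (Nat.card {j // R j ∈ ShStar i} : ℝ) * 2 ^ (i - 1) ≤ (C + 2) * (x : ℝ) ^ 2 := by
    have hle : Nat.card {j // R j ∈ ShStar i} * 2 ^ (i - 1) ≤ (C + 2) * x ^ 2 :=
      calc Nat.card {j // R j ∈ ShStar i} * 2 ^ (i - 1)
          ≤ n.count i * 2 ^ (i - 1) := Nat.mul_le_mul_right _ (hcard i)
        _ ≤ C * x ^ 2 := hcount i
        _ ≤ (C + 2) * x ^ 2 := Nat.mul_le_mul_right _ (by omega)
    exact_mod_cast hle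
  refine ⟨L, X, R, fun j => ε j, fun j => ⟨?_, ?_⟩, hprod, by simpa using hcard_mul 0,
    fun i _ _ => (le_div_iff₀ (by positivity)).2 (hcard_mul i), fun j i hi => ?_⟩
  · exact (hR j).elim fun i hi => ShStar_subset_RinfStar i hi
  · exact (Int.units_eq_one_or (ε j)).imp (congrArg Units.val) (congrArg Units.val)
  · have hpos : 0 < Nat.card {j // R j ∈ ShStar i} := Nat.card_pos_iff.2 ⟨⟨j, hi⟩, inferInstance⟩
    have hi_le : i ≤ Nat.log 2 x := by
      by_contra! hlt
      linarith [hcard i, hlog i hlt]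
    exact (Nat.cast_le.2 hi_le).trans (Real.natLog_le_logb x 2)
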